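/- arXiv:math/0609058 — 3 statements merged into one kernel-verified Lean document; each statement's English description precedes it below -/
import Mathlib

section
/- For every real number ξ, the limit as u → 0⁻ of (1/(2πi)) ∫_{−∞}^{∞} [η/((1+η²)(ξ + iu − η))] dη exists and equals 1/(2(ξ−i)). -/
open MeasureTheory Complex

/-!
Since `η / (1 + η ^ 2)` is half the sum of `(η - i)⁻¹` and `(η + i)⁻¹`, it suffices to take Cauchy
integrals of simple fractions `(η - w)⁻¹` at a point `z` of the lower half-plane. For `w ≠ z` the
integrand is the difference of `(η - w)⁻¹` and `(η - z)⁻¹` divided by `z - w`, so the principal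
logarithms `log (η - w)` and `log (η - z)` provide a primitive. As `η` runs from `-∞` to `∞`, the
imaginary part of `log (η - w)` changes by `π` or `-π` according to the side of the real line on
which `w` lies. So `(η - w)⁻¹` contributes `(z - w)⁻¹` for `w` in the upper half-plane and `0` for
`w` in the lower one, and the limit `z → ξ` is a matter of continuity.
-/

open Filter Topology

section SimpleFractions

variable {w z : ℂ}

lemma ofReal_sub_mem_slitPlane (hw : w.im ≠ 0) (x : ℝ) : (x : ℂ) - w ∈ slitPlane :=
  Or.inr (by simpa using hw)

lemma ofReal_sub_ne_zero (hw : w.im ≠ 0) (x : ℝ) : (x : ℂ) - w ≠ 0 :=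
  slitPlane_ne_zero (ofReal_sub_mem_slitPlane hw x)

lemma continuous_inv_ofReal_sub (hw : w.im ≠ 0) : Continuous fun x : ℝ => ((x : ℂ) - w)⁻¹ :=
  (continuous_ofReal.sub continuous_const).inv₀ (ofReal_sub_ne_zero hw)

lemma hasDerivAt_ofReal_sub (w : ℂ) (x : ℝ) : HasDerivAt (fun y : ℝ => (y : ℂ) - w) 1 x :=
  (hasDerivAt_id x).ofReal_comp.sub_const w

lemma hasDerivAt_log_ofReal_sub (hw : w.im ≠ 0) (x : ℝ) :
    HasDerivAt (fun y : ℝ => log ((y : ℂ) - w)) ((x : ℂ) - w)⁻¹ x := by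
  simpa only [one_div] using
    (hasDerivAt_ofReal_sub w x).clog_real (ofReal_sub_mem_slitPlane hw x)

lemma norm_inv_ofReal_sub_le (hw : w.im ≠ 0) (x : ℝ) : ‖((x : ℂ) - w)⁻¹‖ ≤ |w.im|⁻¹ := by
  rw [norm_inv]
  have him : |w.im| ≤ ‖(x : ℂ) - w‖ := by simpa using abs_im_le_norm ((x : ℂ) - w)
  exact inv_anti₀ (abs_pos.2 hw) him

lemma norm_ofReal_sub_I_div_ofReal_sub_le (hw : w.im ≠ 0) (x : ℝ) :
    ‖((x : ℂ) - I) / (x - w)‖ ≤ 1 + ‖w - I‖ * |w.im|⁻¹ := by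
  have hsplit : ((x : ℂ) - I) / (x - w) = 1 + (w - I) * ((x : ℂ) - w)⁻¹ := by
    field_simp [ofReal_sub_ne_zero hw x]
    ring
  rw [hsplit]
  refine (norm_add_le _ _).trans ?_
  rw [norm_one, norm_mul]
  gcongr
  exact norm_inv_ofReal_sub_le hw x

lemma norm_ofReal_sub_I_sq (x : ℝ) : ‖(x : ℂ) - I‖ ^ 2 = 1 + x ^ 2 := by
  rw [Complex.sq_norm, normSq_apply]
  simp only [sub_re, ofReal_re, I_re, sub_zero, sub_im, ofReal_im, I_im, zero_sub]
  ring

lemma integrable_inv_sub_mul_inv_sub (hw : w.im ≠ 0) (hz : z.im ≠ 0) :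
    Integrable fun x : ℝ => ((x : ℂ) - w)⁻¹ * ((x : ℂ) - z)⁻¹ := by
  set C : ℂ → ℝ := fun v => 1 + ‖v - I‖ * |v.im|⁻¹
  refine (integrable_inv_one_add_sq.const_mul (C w * C z)).mono'
    ((continuous_inv_ofReal_sub hw).mul (continuous_inv_ofReal_sub hz)).aestronglyMeasurable
    (.of_forall fun x => ?_)
  have hpos : 0 < ‖(x : ℂ) - I‖ := norm_pos_iff.2 (ofReal_sub_ne_zero (by simp) x)
  calc ‖((x : ℂ) - w)⁻¹ * ((x : ℂ) - z)⁻¹‖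
      = ‖((x : ℂ) - I) / (x - w)‖ * ‖((x : ℂ) - I) / (x - z)‖ * (‖(x : ℂ) - I‖ ^ 2)⁻¹ := by
        simp only [norm_mul, norm_inv, norm_div]
        field_simp
    _ ≤ C w * C z * (1 + x ^ 2)⁻¹ := by
        rw [norm_ofReal_sub_I_sq]
        gcongr
        · exact norm_ofReal_sub_I_div_ofReal_sub_le hw x
        · exact norm_ofReal_sub_I_div_ofReal_sub_le hz x

lemma tendsto_log_ofReal_sub_sub_log_atTop (w : ℂ) :
    Tendsto (fun x : ℝ => log ((x : ℂ) - w) - Real.log x) atTop (𝓝 0) := by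
  have hratio : Tendsto (fun x : ℝ => 1 - w * (x : ℂ)⁻¹) atTop (𝓝 1) := by
    have hinv : Tendsto (fun x : ℝ => (x : ℂ)⁻¹) atTop (𝓝 0) :=
      tendsto_inv₀_cobounded.comp (RCLike.tendsto_ofReal_atTop_cobounded ℂ)
    simpa only [mul_zero, sub_zero] using (hinv.const_mul w).const_sub 1
  have hlog : Tendsto (fun x : ℝ => log (1 - w * (x : ℂ)⁻¹)) atTop (𝓝 0) := by
    simpa only [log_one] using hratio.clog one_mem_slitPlane
  refine hlog.congr' ?_
  filter_upwards [hratio.eventually_ne one_ne_zero, eventually_gt_atTop 0] with x hne hx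
  have hfactor : (x : ℂ) - w = x * (1 - w * (x : ℂ)⁻¹) := by
    field_simp [ofReal_ne_zero.2 hx.ne']
  rw [hfactor, log_ofReal_mul hx hne, add_sub_cancel_left]

lemma log_neg_eq_sub_sign_im (hw : w.im ≠ 0) :
    log (-w) = log w - SignType.sign w.im * (Real.pi * I) := by
  rcases hw.lt_or_gt with him | him
  · simp only [log, norm_neg, arg_neg_eq_arg_add_pi_of_im_neg him, ofReal_add, sign_neg him,
      SignType.coe_neg_one]
    ring
  · simp only [log, norm_neg, arg_neg_eq_arg_sub_pi_of_im_pos him, ofReal_sub, sign_pos him,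
      SignType.coe_one]
    ring

lemma tendsto_log_ofReal_sub_sub_log_atBot (hw : w.im ≠ 0) :
    Tendsto (fun x : ℝ => log ((x : ℂ) - w) - Real.log x) atBot
      (𝓝 (-(SignType.sign w.im * (Real.pi * I)))) := by
  have hreflect : Tendsto (fun x : ℝ => log (((-x : ℝ) : ℂ) - -w) - Real.log (-x)) atBot (𝓝 0) :=
    (tendsto_log_ofReal_sub_sub_log_atTop (-w)).comp tendsto_neg_atBot_atTop
  rw [← zero_sub]
  refine (hreflect.sub_const _).congr fun x => ?_
  have him : (((-x : ℝ) : ℂ) - -w).im = w.im := by simp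
  have hlog := log_neg_eq_sub_sign_im (him.trans_ne hw)
  rw [him, show -(((-x : ℝ) : ℂ) - -w) = x - w by push_cast; ring] at hlog
  rw [hlog, Real.log_neg_eq_log]
  ring

lemma integral_inv_sub_mul_inv_sub (hw : w.im ≠ 0) (hz : z.im ≠ 0) (hwz : w ≠ z) :
    ∫ x : ℝ, ((x : ℂ) - w)⁻¹ * ((x : ℂ) - z)⁻¹ =
      (SignType.sign w.im - SignType.sign z.im) * (Real.pi * I) / (w - z) := by
  have hderiv (x : ℝ) : HasDerivAt (fun y : ℝ => (log (y - w) - log (y - z)) / (w - z))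
      (((x : ℂ) - w)⁻¹ * ((x : ℂ) - z)⁻¹) x := by
    refine (((hasDerivAt_log_ofReal_sub hw x).sub
      (hasDerivAt_log_ofReal_sub hz x)).div_const (w - z)).congr_deriv ?_
    field_simp [ofReal_sub_ne_zero hw x, ofReal_sub_ne_zero hz x]
    ring
  have hbot := ((tendsto_log_ofReal_sub_sub_log_atBot hw).sub
    (tendsto_log_ofReal_sub_sub_log_atBot hz)).div_const (w - z)
  have htop := ((tendsto_log_ofReal_sub_sub_log_atTop w).sub
    (tendsto_log_ofReal_sub_sub_log_atTop z)).div_const (w - z)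
  simp only [sub_sub_sub_cancel_right] at hbot htop
  rw [integral_of_hasDerivAt_of_tendsto hderiv (integrable_inv_sub_mul_inv_sub hw hz) hbot htop]
  ring

lemma integral_inv_sub_mul_inv_sub_self (hw : w.im ≠ 0) :
    ∫ x : ℝ, ((x : ℂ) - w)⁻¹ * ((x : ℂ) - w)⁻¹ = 0 := by
  have hderiv (x : ℝ) :
      HasDerivAt (fun y : ℝ => -((y : ℂ) - w)⁻¹) (((x : ℂ) - w)⁻¹ * ((x : ℂ) - w)⁻¹) x := by
    refine ((hasDerivAt_ofReal_sub w x).fun_inv (ofReal_sub_ne_zero hw x)).neg.congr_deriv ?_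
    field_simp
  have hlim {l : Filter ℝ} (hl : Tendsto ((↑) : ℝ → ℂ) l (Bornology.cobounded ℂ)) :
      Tendsto (fun y : ℝ => -((y : ℂ) - w)⁻¹) l (𝓝 0) := by
    simpa using (tendsto_inv₀_cobounded.comp ((tendsto_sub_const_cobounded w).comp hl)).neg
  rw [integral_of_hasDerivAt_of_tendsto hderiv (integrable_inv_sub_mul_inv_sub hw hw)
    (hlim (RCLike.tendsto_ofReal_atBot_cobounded ℂ))
    (hlim (RCLike.tendsto_ofReal_atTop_cobounded ℂ)), sub_zero]

end SimpleFractions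

/-- The Cauchy integral over the real line of `f` at the point `z`. Its boundary values on the real
line from the lower half-plane form the projection `π⁺ f` of the Boutet de Monvel calculus;
the kernel is `(z - η)⁻¹`, the opposite of the one in the Cauchy integral formula. -/
noncomputable def realLineCauchyIntegral (f : ℝ → ℂ) (z : ℂ) : ℂ :=
  1 / (2 * (Real.pi : ℂ) * I) * ∫ η : ℝ, f η / (z - η)

section CauchyIntegral

variable {f g : ℝ → ℂ} {w z : ℂ}

lemma realLineCauchyIntegral_add (hf : Integrable fun η : ℝ => f η / (z - η))
    (hg : Integrable fun η : ℝ => g η / (z - η)) :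
    realLineCauchyIntegral (fun η => f η + g η) z =
      realLineCauchyIntegral f z + realLineCauchyIntegral g z := by
  simp only [realLineCauchyIntegral, add_div]
  rw [integral_add hf hg, mul_add]

lemma realLineCauchyIntegral_div_const (f : ℝ → ℂ) (c z : ℂ) :
    realLineCauchyIntegral (fun η => f η / c) z = realLineCauchyIntegral f z / c := by
  simp only [realLineCauchyIntegral, div_right_comm _ c]
  rw [integral_div, mul_div_assoc]

lemma inv_ofReal_sub_div_sub_ofReal (w z : ℂ) (η : ℝ) :
    ((η : ℂ) - w)⁻¹ / (z - η) = -(((η : ℂ) - w)⁻¹ * ((η : ℂ) - z)⁻¹) := by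
  rw [← neg_sub (η : ℂ) z, div_neg, div_eq_mul_inv]

lemma integrable_inv_sub_div_sub (hw : w.im ≠ 0) (hz : z.im ≠ 0) :
    Integrable fun η : ℝ => ((η : ℂ) - w)⁻¹ / (z - η) := by
  simpa only [inv_ofReal_sub_div_sub_ofReal] using (integrable_inv_sub_mul_inv_sub hw hz).fun_neg

lemma realLineCauchyIntegral_inv_sub (w z : ℂ) :
    realLineCauchyIntegral (fun η => ((η : ℂ) - w)⁻¹) z =
      -(1 / (2 * Real.pi * I) * ∫ η : ℝ, ((η : ℂ) - w)⁻¹ * ((η : ℂ) - z)⁻¹) := by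
  simp only [realLineCauchyIntegral, inv_ofReal_sub_div_sub_ofReal]
  rw [integral_neg, mul_neg]

lemma realLineCauchyIntegral_inv_sub_of_im_pos (hw : 0 < w.im) (hz : z.im < 0) :
    realLineCauchyIntegral (fun η => ((η : ℂ) - w)⁻¹) z = (z - w)⁻¹ := by
  have hwz : w ≠ z := fun h => (hz.trans hw).ne' (congrArg im h)
  rw [realLineCauchyIntegral_inv_sub, integral_inv_sub_mul_inv_sub hw.ne' hz.ne hwz,
    sign_pos hw, sign_neg hz, ← neg_sub w z, inv_neg]
  simp only [SignType.coe_one, SignType.coe_neg_one, sub_neg_eq_add, one_add_one_eq_two]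
  field_simp

lemma realLineCauchyIntegral_inv_sub_of_im_neg (hw : w.im < 0) (hz : z.im < 0) :
    realLineCauchyIntegral (fun η => ((η : ℂ) - w)⁻¹) z = 0 := by
  rw [realLineCauchyIntegral_inv_sub, neg_eq_zero]
  refine mul_eq_zero_of_right _ ?_
  rcases eq_or_ne w z with rfl | hwz
  · exact integral_inv_sub_mul_inv_sub_self hw.ne
  · rw [integral_inv_sub_mul_inv_sub hw.ne hz.ne hwz, sign_neg hw, sign_neg hz, sub_self,
      zero_mul, zero_div]

lemma ofReal_div_one_add_sq (x : ℝ) :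
    (x : ℂ) / (1 + (x : ℂ) ^ 2) = (((x : ℂ) - I)⁻¹ + ((x : ℂ) - -I)⁻¹) / 2 := by
  have hI : (x : ℂ) - I ≠ 0 := ofReal_sub_ne_zero (by simp) x
  have hnegI : (x : ℂ) - -I ≠ 0 := ofReal_sub_ne_zero (by simp) x
  have hfactor : 1 + (x : ℂ) ^ 2 = (x - I) * (x - -I) := by
    linear_combination I_sq
  rw [hfactor, inv_add_inv hI hnegI]
  ring

lemma realLineCauchyIntegral_div_one_add_sq (hz : z.im < 0) :
    realLineCauchyIntegral (fun η => (η : ℂ) / (1 + (η : ℂ) ^ 2)) z = 1 / (2 * (z - I)) := by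
  have hI : 0 < I.im := by simp
  have hnegI : (-I).im < 0 := by simp
  simp only [ofReal_div_one_add_sq]
  rw [realLineCauchyIntegral_div_const,
    realLineCauchyIntegral_add (integrable_inv_sub_div_sub hI.ne' hz.ne)
      (integrable_inv_sub_div_sub hnegI.ne hz.ne),
    realLineCauchyIntegral_inv_sub_of_im_pos hI hz,
    realLineCauchyIntegral_inv_sub_of_im_neg hnegI hz, add_zero, one_div, mul_inv_rev,
    div_eq_mul_inv]

end CauchyIntegral

/-- for every real ξ, the limit as u → 0⁻ of
(1/(2πi)) ∫_{-∞}^{∞} η dη / ((1+η²)(ξ + iu − η)) equals 1/(2(ξ−i)). -/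
theorem pi_plus_eta_over_one_plus_sq (ξ : ℝ) :
    Filter.Tendsto
      (fun u : ℝ =>
        (1 / (2 * (Real.pi : ℂ) * I)) *
          ∫ η : ℝ, (η : ℂ) / ((1 + (η : ℂ) ^ 2) * ((ξ : ℂ) + I * (u : ℂ) - (η : ℂ))))
      (nhdsWithin 0 (Set.Iio 0))
      (nhds (1 / (2 * ((ξ : ℂ) - I)))) := by
  have hpole : (ξ : ℂ) - I ≠ 0 := ofReal_sub_ne_zero (by simp) ξ
  have hcont : ContinuousAt (fun u : ℝ => 1 / (2 * ((ξ : ℂ) + I * u - I))) 0 :=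
    continuousAt_const.div (by fun_prop) (by simpa using hpole)
  have hlim : Tendsto (fun u : ℝ => 1 / (2 * ((ξ : ℂ) + I * u - I))) (𝓝[<] 0)
      (𝓝 (1 / (2 * ((ξ : ℂ) - I)))) := by
    simpa only [ofReal_zero, mul_zero, add_zero] using hcont.tendsto.mono_left nhdsWithin_le_nhds
  refine hlim.congr' ?_
  filter_upwards [self_mem_nhdsWithin] with u hu
  have him : ((ξ : ℂ) + I * u).im < 0 := by simpa using hu
  simpa only [realLineCauchyIntegral, div_div] using
    (realLineCauchyIntegral_div_one_add_sq him).symm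
end

section
/- For every real number ξ, the limit as u → 0⁻ of (1/(2πi)) ∫_{−∞}^{∞} [(1−η²)/((1+η²)³ (ξ + iu − η))] dη exists and equals (1/2)[ 1/(4i(ξ−i)) + 1/(8(ξ−i)²) − (3ξ−7i)/(8(ξ−i)³) ]. -/
open MeasureTheory Complex

/-!
For `z` in the open lower half-plane, `f ↦ (2πi)⁻¹ ∫ f(η) / (z - η) dη` sends `(η - a)⁻ⁿ⁻¹` to
`(z - a)⁻ⁿ⁻¹` if `a` lies in the upper half-plane and to `0` if `a` lies in the lower one. For
`n = 0` this comes from the variation of the arguments of `η - a` and `η - z` along the real line;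
the identity `(η - a)⁻¹ (z - η)⁻¹ = (z - a)⁻¹ ((η - a)⁻¹ - (η - z)⁻¹)` then reduces the order of the
pole, because the higher powers `(η - a)⁻ⁿ⁻²` integrate to zero. So the transform of a rational
function without real poles that vanishes at infinity is the part of its partial fraction
decomposition with poles in the upper half-plane, which is continuous up to the real line.
-/

section

open Filter Topology
open scoped Real

section Resolvent

variable {a b : ℂ}

lemma ofReal_sub_ne_zero_of_im_ne_zero (ha : a.im ≠ 0) (x : ℝ) : (x : ℂ) - a ≠ 0 :=
  fun h ↦ ha <| by simpa using congrArg Complex.im h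

lemma continuous_inv_ofReal_sub_s7 (ha : a.im ≠ 0) : Continuous fun x : ℝ ↦ ((x : ℂ) - a)⁻¹ :=
  (continuous_ofReal.sub continuous_const).inv₀ (ofReal_sub_ne_zero_of_im_ne_zero ha)

lemma norm_inv_ofReal_sub_le_s7 (ha : a.im ≠ 0) (x : ℝ) : ‖((x : ℂ) - a)⁻¹‖ ≤ |a.im|⁻¹ := by
  rw [norm_inv]
  gcongr
  simpa using abs_im_le_norm ((x : ℂ) - a)

lemma tendsto_inv_ofReal_sub_cobounded (a : ℂ) :
    Tendsto (fun x : ℝ ↦ ((x : ℂ) - a)⁻¹) (Bornology.cobounded ℝ) (𝓝 0) :=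
  tendsto_inv₀_cobounded.comp <|
    (tendsto_sub_const_cobounded a).comp (RCLike.tendsto_ofReal_cobounded_cobounded (𝕜 := ℂ))

lemma memLp_two_inv_ofReal_sub (ha : a.im ≠ 0) : MemLp (fun x : ℝ ↦ ((x : ℂ) - a)⁻¹) 2 := by
  rw [memLp_two_iff_integrable_sq_norm (continuous_inv_ofReal_sub_s7 ha).aestronglyMeasurable]
  have h := ((integrable_inv_one_add_sq.comp_div ha).comp_sub_right a.re).const_mul (a.im ^ 2)⁻¹
  refine h.congr (.of_forall fun x ↦ ?_)
  have hsq : ‖(x : ℂ) - a‖ ^ 2 = (x - a.re) ^ 2 + a.im ^ 2 := by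
    rw [← normSq_eq_norm_sq, normSq_apply]
    simp [sq]
  simp only [norm_inv, inv_pow, hsq, ← mul_inv]
  congr 1
  field_simp
  ring

lemma integrable_inv_pow_mul_inv (ha : a.im ≠ 0) (hb : b.im ≠ 0) (n : ℕ) :
    Integrable fun x : ℝ ↦ ((x : ℂ) - a)⁻¹ ^ (n + 1) * ((x : ℂ) - b)⁻¹ := by
  have h : Integrable fun x : ℝ ↦ ((x : ℂ) - a)⁻¹ * ((x : ℂ) - b)⁻¹ :=
    (memLp_two_inv_ofReal_sub ha).integrable_mul (memLp_two_inv_ofReal_sub hb)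
  have hbound (x : ℝ) : ‖((x : ℂ) - a)⁻¹ ^ n‖ ≤ |a.im|⁻¹ ^ n := by
    rw [norm_pow]
    gcongr
    exact norm_inv_ofReal_sub_le_s7 ha x
  simpa only [pow_succ, mul_assoc] using
    h.bdd_mul ((continuous_inv_ofReal_sub_s7 ha).fun_pow n).aestronglyMeasurable (.of_forall hbound)

lemma integral_inv_pow_add_two_eq_zero (ha : a.im ≠ 0) (n : ℕ) :
    ∫ x : ℝ, ((x : ℂ) - a)⁻¹ ^ (n + 2) = 0 := by
  have hderiv (x : ℝ) : HasDerivAt (fun x : ℝ ↦ -((n : ℂ) + 1)⁻¹ * ((x : ℂ) - a)⁻¹ ^ (n + 1))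
      (((x : ℂ) - a)⁻¹ ^ (n + 2)) x := by
    have hsub : HasDerivAt (fun x : ℝ ↦ (x : ℂ) - a) 1 x := ofRealCLM.hasDerivAt.sub_const a
    refine (((hsub.fun_inv (ofReal_sub_ne_zero_of_im_ne_zero ha x)).fun_pow (n + 1)).const_mul
      (-((n : ℂ) + 1)⁻¹)).congr_deriv ?_
    have hn : (n : ℂ) + 1 ≠ 0 := n.cast_add_one_ne_zero
    rw [add_tsub_cancel_right, pow_add _ n 2, inv_pow _ 2]
    push_cast
    field_simp
  have hlim : Tendsto (fun x : ℝ ↦ -((n : ℂ) + 1)⁻¹ * ((x : ℂ) - a)⁻¹ ^ (n + 1))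
      (Bornology.cobounded ℝ) (𝓝 0) := by
    simpa using ((tendsto_inv_ofReal_sub_cobounded a).pow (n + 1)).const_mul (-((n : ℂ) + 1)⁻¹)
  have hint : Integrable fun x : ℝ ↦ ((x : ℂ) - a)⁻¹ ^ (n + 2) := by
    simpa only [← pow_succ] using integrable_inv_pow_mul_inv ha ha n
  have hbot := hlim.mono_left IsOrderBornology.atBot_le_cobounded
  have htop := hlim.mono_left IsOrderBornology.atTop_le_cobounded
  rw [integral_of_hasDerivAt_of_tendsto hderiv hint hbot htop, sub_self]

end Resolvent

section Logarithm

variable {a b : ℂ}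

lemma log_neg_of_im_ne_zero {w : ℂ} (hw : w.im ≠ 0) :
    log (-w) = log w - π * Real.sign w.im * I := by
  rcases hw.lt_or_gt with h | h
  · rw [log, log, norm_neg, arg_neg_eq_arg_add_pi_of_im_neg h, Real.sign_of_neg h]
    push_cast
    ring
  · rw [log, log, norm_neg, arg_neg_eq_arg_sub_pi_of_im_pos h, Real.sign_of_pos h]
    push_cast
    ring

lemma tendsto_log_ofReal_sub_atTop (a : ℂ) :
    Tendsto (fun x : ℝ ↦ log (x - a) - Real.log x) atTop (𝓝 0) := by
  have hone : Tendsto (fun x : ℝ ↦ 1 - a * (x : ℂ)⁻¹) atTop (𝓝 1) := by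
    simpa using ((tendsto_inv_ofReal_sub_cobounded 0).mono_left
      IsOrderBornology.atTop_le_cobounded).const_mul a |>.const_sub 1
  have hlog : Tendsto (fun x : ℝ ↦ log (1 - a * (x : ℂ)⁻¹)) atTop (𝓝 0) := by
    simpa using hone.clog one_mem_slitPlane
  refine hlog.congr' ?_
  filter_upwards [eventually_gt_atTop 0, hone.eventually_ne one_ne_zero] with x hx hne
  have hx' : (x : ℂ) ≠ 0 := ofReal_ne_zero.2 hx.ne'
  have hfactor : (x : ℂ) - a = x * (1 - a * (x : ℂ)⁻¹) := by field_simp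
  rw [hfactor, log_ofReal_mul hx hne, add_sub_cancel_left]

lemma tendsto_log_ofReal_sub_atBot (ha : a.im ≠ 0) :
    Tendsto (fun x : ℝ ↦ log (x - a) - Real.log x) atBot (𝓝 (-(π * Real.sign a.im * I))) := by
  have h := ((tendsto_log_ofReal_sub_atTop (-a)).comp tendsto_neg_atBot_atTop).sub_const
    (π * Real.sign a.im * I)
  rw [zero_sub] at h
  refine h.congr fun x ↦ ?_
  have him : (-(x : ℂ) + a).im = a.im := by simp
  have hlog := log_neg_of_im_ne_zero (him ▸ ha)
  rw [him, neg_add, neg_neg, ← sub_eq_add_neg] at hlog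
  simp only [Function.comp_apply, ofReal_neg, sub_neg_eq_add, Real.log_neg_eq_log, hlog]
  ring

lemma hasDerivAt_log_ofReal_sub_s7 (ha : a.im ≠ 0) (x : ℝ) :
    HasDerivAt (fun x : ℝ ↦ log (x - a)) ((x : ℂ) - a)⁻¹ x := by
  have hslit : (x : ℂ) - a ∈ slitPlane := mem_slitPlane_iff.2 <| .inr <| by simpa using ha
  simpa using (ofRealCLM.hasDerivAt.sub_const a).clog_real hslit

lemma integral_inv_sub_inv (ha : a.im ≠ 0) (hb : b.im ≠ 0) :
    ∫ x : ℝ, (((x : ℂ) - a)⁻¹ - ((x : ℂ) - b)⁻¹) =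
      π * I * (Real.sign a.im - Real.sign b.im) := by
  have hderiv (x : ℝ) := (hasDerivAt_log_ofReal_sub_s7 ha x).fun_sub (hasDerivAt_log_ofReal_sub_s7 hb x)
  have hint : Integrable fun x : ℝ ↦ ((x : ℂ) - a)⁻¹ - ((x : ℂ) - b)⁻¹ := by
    refine ((integrable_inv_pow_mul_inv ha hb 0).const_mul (a - b)).congr (.of_forall fun x ↦ ?_)
    have hxa := ofReal_sub_ne_zero_of_im_ne_zero ha x
    have hxb := ofReal_sub_ne_zero_of_im_ne_zero hb x
    simp only [zero_add, pow_one]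
    field_simp
    ring
  have htop := (tendsto_log_ofReal_sub_atTop a).sub (tendsto_log_ofReal_sub_atTop b)
  have hbot := (tendsto_log_ofReal_sub_atBot ha).sub (tendsto_log_ofReal_sub_atBot hb)
  simp only [sub_sub_sub_cancel_right] at htop hbot
  rw [integral_of_hasDerivAt_of_tendsto hderiv hint hbot htop]
  ring

end Logarithm

lemma integral_inv_pow_mul_inv {a z : ℂ} (ha : a.im ≠ 0) (hz : z.im ≠ 0) (n : ℕ) :
    ∫ x : ℝ, ((x : ℂ) - a)⁻¹ ^ (n + 1) * (z - x)⁻¹ =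
      π * I * (Real.sign a.im - Real.sign z.im) * (z - a)⁻¹ ^ (n + 1) := by
  have hneg (x : ℝ) : (z - x)⁻¹ = -((x : ℂ) - z)⁻¹ := by rw [← inv_neg, neg_sub]
  rcases eq_or_ne z a with rfl | hza
  · simp only [hneg, mul_neg, ← pow_succ, integral_neg, integral_inv_pow_add_two_eq_zero hz]
    simp
  have hza' : z - a ≠ 0 := sub_ne_zero.2 hza
  have hresolvent (x : ℝ) : ((x : ℂ) - a)⁻¹ * (z - x)⁻¹ =
      (z - a)⁻¹ * (((x : ℂ) - a)⁻¹ - ((x : ℂ) - z)⁻¹) := by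
    have hxa := ofReal_sub_ne_zero_of_im_ne_zero ha x
    have hxz := ofReal_sub_ne_zero_of_im_ne_zero hz x
    rw [hneg]
    field_simp
    ring
  induction n with
  | zero =>
    simp only [zero_add, pow_one, hresolvent, integral_const_mul, integral_inv_sub_inv ha hz]
    ring
  | succ n ih =>
    have hreduce (x : ℝ) : ((x : ℂ) - a)⁻¹ ^ (n + 2) * (z - x)⁻¹ =
        (z - a)⁻¹ * (((x : ℂ) - a)⁻¹ ^ (n + 2) + ((x : ℂ) - a)⁻¹ ^ (n + 1) * (z - x)⁻¹) := by
      linear_combination ((x : ℂ) - a)⁻¹ ^ (n + 1) * (hresolvent x) +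
        (z - a)⁻¹ * ((x : ℂ) - a)⁻¹ ^ (n + 1) * -hneg x
    have hint₁ : Integrable fun x : ℝ ↦ ((x : ℂ) - a)⁻¹ ^ (n + 2) := by
      simpa only [← pow_succ] using integrable_inv_pow_mul_inv ha ha n
    have hint₂ : Integrable fun x : ℝ ↦ ((x : ℂ) - a)⁻¹ ^ (n + 1) * (z - x)⁻¹ := by
      simpa only [hneg, mul_neg] using (integrable_inv_pow_mul_inv ha hz n).fun_neg
    simp only [hreduce, integral_const_mul, integral_add hint₁ hint₂,
      integral_inv_pow_add_two_eq_zero ha, ih]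
    ring

/-- `HasCauchyTransform f z v` says that the Cauchy integral `(2πi)⁻¹ ∫ f(η) / (z - η) dη` converges
absolutely and equals `v`. The limits of these values as `z` approaches the real line from below
give the projection `π⁺ f` of Boutet de Monvel's calculus. -/
structure HasCauchyTransform (f : ℝ → ℂ) (z v : ℂ) : Prop where
  integrable : Integrable fun x : ℝ ↦ f x / (z - x)
  integral_eq : 1 / (2 * π * I) * ∫ x : ℝ, f x / (z - x) = v

namespace HasCauchyTransform

variable {f g : ℝ → ℂ} {a z v w : ℂ}

lemma add (hf : HasCauchyTransform f z v) (hg : HasCauchyTransform g z w) :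
    HasCauchyTransform (fun x ↦ f x + g x) z (v + w) where
  integrable := by simpa only [add_div] using hf.integrable.fun_add hg.integrable
  integral_eq := by
    simp only [add_div]
    rw [integral_add hf.integrable hg.integrable, mul_add, hf.integral_eq, hg.integral_eq]

lemma const_mul (c : ℂ) (hf : HasCauchyTransform f z v) :
    HasCauchyTransform (fun x ↦ c * f x) z (c * v) where
  integrable := by simpa only [mul_div_assoc] using hf.integrable.const_mul c
  integral_eq := by
    simp only [mul_div_assoc]
    rw [integral_const_mul, mul_left_comm, hf.integral_eq]

lemma inv_sub_pow (ha : a.im ≠ 0) (hz : z.im ≠ 0) (n : ℕ) :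
    HasCauchyTransform (fun x ↦ ((x : ℂ) - a)⁻¹ ^ (n + 1)) z
      ((Real.sign a.im - Real.sign z.im) / 2 * (z - a)⁻¹ ^ (n + 1)) where
  integrable := by
    refine (integrable_inv_pow_mul_inv ha hz n).fun_neg.congr (.of_forall fun x ↦ ?_)
    simp only [div_eq_mul_inv, ← mul_neg, ← inv_neg, neg_sub]
  integral_eq := by
    have hpi : (π : ℂ) ≠ 0 := ofReal_ne_zero.2 Real.pi_ne_zero
    simp only [div_eq_mul_inv _ (z - _), integral_inv_pow_mul_inv ha hz n]
    field_simp

lemma inv_sub_pow_of_im_pos (ha : 0 < a.im) (hz : z.im < 0) (n : ℕ) :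
    HasCauchyTransform (fun x ↦ ((x : ℂ) - a)⁻¹ ^ (n + 1)) z ((z - a)⁻¹ ^ (n + 1)) := by
  convert inv_sub_pow ha.ne' hz.ne n using 1
  norm_num [Real.sign_of_pos ha, Real.sign_of_neg hz]

lemma inv_sub_pow_of_im_neg (ha : a.im < 0) (hz : z.im < 0) (n : ℕ) :
    HasCauchyTransform (fun x ↦ ((x : ℂ) - a)⁻¹ ^ (n + 1)) z 0 := by
  convert inv_sub_pow ha.ne hz.ne n using 1
  simp [Real.sign_of_neg ha, Real.sign_of_neg hz]

lemma tendsto_of_continuousAt {F : ℂ → ℂ} {ξ : ℝ}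
    (hf : ∀ z : ℂ, z.im < 0 → HasCauchyTransform f z (F z)) (hF : ContinuousAt F ξ) :
    Tendsto (fun u : ℝ ↦ 1 / (2 * π * I) * ∫ x : ℝ, f x / (ξ + I * u - x)) (𝓝[<] 0)
      (𝓝 (F ξ)) := by
  have hpath : Tendsto (fun u : ℝ ↦ (ξ : ℂ) + I * u) (𝓝[<] 0) (𝓝 ξ) := by
    have hcont : Continuous fun u : ℝ ↦ (ξ : ℂ) + I * u := by fun_prop
    exact (hcont.tendsto' 0 ξ (by simp)).mono_left nhdsWithin_le_nhds
  refine (hF.tendsto.comp hpath).congr' ?_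
  filter_upwards [self_mem_nhdsWithin] with u hu
  exact (hf _ (by simpa using hu)).integral_eq.symm

end HasCauchyTransform

/-- The principal part of `(1 - z ^ 2) / (1 + z ^ 2) ^ 3` at its pole `a`, where `a = i` or
`a = -i`; `a ^ 2 = -1` is used to give the Laurent coefficients one form for both poles. -/
noncomputable def symbolPrincipalPart (a z : ℂ) : ℂ :=
  -a / 8 * (z - a)⁻¹ + -1 / 8 * (z - a)⁻¹ ^ 2 + a / 4 * (z - a)⁻¹ ^ 3

lemma one_sub_sq_div_one_add_sq_cube_eq {a x : ℂ} (ha : a ^ 2 = -1) (h : x - a ≠ 0)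
    (h' : x - -a ≠ 0) :
    (1 - x ^ 2) / (1 + x ^ 2) ^ 3 = symbolPrincipalPart a x + symbolPrincipalPart (-a) x := by
  have hfactor : 1 + x ^ 2 = (x - a) * (x - -a) := by linear_combination ha
  rw [symbolPrincipalPart, symbolPrincipalPart, hfactor]
  field_simp
  linear_combination (8 * (x ^ 2 - a ^ 2) ^ 2 - 32 * (x ^ 2 + a ^ 2 - 1)) * ha

lemma HasCauchyTransform.symbolPrincipalPart_of_im_pos {a z : ℂ} (ha : 0 < a.im) (hz : z.im < 0) :
    HasCauchyTransform (fun x ↦ symbolPrincipalPart a x) z (symbolPrincipalPart a z) := by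
  have h := inv_sub_pow_of_im_pos ha hz
  simpa only [symbolPrincipalPart, zero_add, pow_one] using
    (((h 0).const_mul (-a / 8)).add ((h 1).const_mul (-1 / 8))).add ((h 2).const_mul (a / 4))

lemma HasCauchyTransform.symbolPrincipalPart_of_im_neg {a z : ℂ} (ha : a.im < 0) (hz : z.im < 0) :
    HasCauchyTransform (fun x ↦ symbolPrincipalPart a x) z 0 := by
  have h := inv_sub_pow_of_im_neg ha hz
  simpa only [symbolPrincipalPart, zero_add, pow_one, mul_zero, add_zero] using
    (((h 0).const_mul (-a / 8)).add ((h 1).const_mul (-1 / 8))).add ((h 2).const_mul (a / 4))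

lemma hasCauchyTransform_one_sub_sq_div_one_add_sq_cube {z : ℂ} (hz : z.im < 0) :
    HasCauchyTransform (fun x ↦ (1 - (x : ℂ) ^ 2) / (1 + (x : ℂ) ^ 2) ^ 3) z
      (symbolPrincipalPart I z) := by
  have hI : 0 < I.im := by simp
  have hI' : (-I).im < 0 := by simp
  have h := (HasCauchyTransform.symbolPrincipalPart_of_im_pos hI hz).add
    (HasCauchyTransform.symbolPrincipalPart_of_im_neg hI' hz)
  rw [add_zero] at h
  convert h using 2 with x
  exact one_sub_sq_div_one_add_sq_cube_eq I_sq (ofReal_sub_ne_zero_of_im_ne_zero hI.ne' x)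
    (ofReal_sub_ne_zero_of_im_ne_zero hI'.ne x)

lemma continuousAt_symbolPrincipalPart {a z : ℂ} (h : z - a ≠ 0) :
    ContinuousAt (symbolPrincipalPart a) z := by
  unfold symbolPrincipalPart
  fun_prop (disch := exact h)

lemma symbolPrincipalPart_I_eq {z : ℂ} (h : z - I ≠ 0) :
    symbolPrincipalPart I z = (1 / 2) * (1 / (4 * I * (z - I)) + 1 / (8 * (z - I) ^ 2)
      - (3 * z - 7 * I) / (8 * (z - I) ^ 3)) := by
  rw [symbolPrincipalPart]
  field_simp
  linear_combination -8 * (z - I) ^ 2 * I_sq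

end

/-- for every real ξ, the limit as u → 0⁻ of
(1/(2πi)) ∫_{-∞}^{∞} (1−η²) dη / ((1+η²)³ (ξ + iu − η)) equals
(1/2)[ 1/(4i(ξ−i)) + 1/(8(ξ−i)²) − (3ξ−7i)/(8(ξ−i)³) ]. -/
theorem pi_plus_one_sub_sq_over_one_plus_sq_cube (ξ : ℝ) :
    Filter.Tendsto
      (fun u : ℝ =>
        (1 / (2 * (Real.pi : ℂ) * I)) *
          ∫ η : ℝ, (1 - (η : ℂ) ^ 2) /
            ((1 + (η : ℂ) ^ 2) ^ 3 * ((ξ : ℂ) + I * (u : ℂ) - (η : ℂ))))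
      (nhdsWithin 0 (Set.Iio 0))
      (nhds ((1 / 2) * (1 / (4 * I * ((ξ : ℂ) - I)) + 1 / (8 * ((ξ : ℂ) - I) ^ 2)
        - (3 * (ξ : ℂ) - 7 * I) / (8 * ((ξ : ℂ) - I) ^ 3)))) := by
  have hne : (ξ : ℂ) - I ≠ 0 := ofReal_sub_ne_zero_of_im_ne_zero (by simp) ξ
  have hlim := HasCauchyTransform.tendsto_of_continuousAt
    (fun _ ↦ hasCauchyTransform_one_sub_sq_div_one_add_sq_cube)
    (continuousAt_symbolPrincipalPart hne)
  simpa only [div_div, symbolPrincipalPart_I_eq hne] using hlim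
end

section
/- Let A be an associative unital algebra over ℂ and τ : A → ℂ a ℂ-linear functional satisfying τ(xy) = τ(yx) for all x, y ∈ A and τ(1) = 4. Let u, v ∈ A satisfy u² = v² = −1 and uv + vu = 0. Then for every real number ξ and every real number a, τ( [ (u+iv)/(2(ξ−i)²) ] · ia·[ v/(1+ξ²)² − 4ξ(u + ξv)/(1+ξ²)³ ] ) = 2a (i − 3ξ) / ((ξ−i)⁴(ξ+i)³). -/
open Complex

/-!
The values of a trace at `u * v` and `v * u` are both equal and opposite, hence zero; so on the
span of `u` and `v` the form `(x, y) ↦ τ (x * y)` is `-τ 1` times the standard dot product. Pairing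
with `u + i v` therefore sends `v` to `-i τ 1` and `u + z v` to `-i (z - i) τ 1`. Since
`1 + z² = (z - i) (z + i)`, the second value lets one factor `z - i` cancel from the difference,
leaving the numerator `(z + i) - 4 z = i - 3 z`.
-/

section Anticommuting

variable {R A : Type*} [CommRing R] [NoZeroDivisors R] [NeZero (2 : R)]

theorem map_mul_eq_zero_of_anticommute {F : Type*} [NonUnitalNonAssocSemiring A] [FunLike F A R]
    [AddMonoidHomClass F A R] {τ : F} {u v : A} (hτ : τ (u * v) = τ (v * u))
    (huv : u * v + v * u = 0) : τ (u * v) = 0 := by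
  have htwo : 2 * τ (u * v) = 0 := calc
    2 * τ (u * v) = τ (u * v + v * u) := by rw [two_mul, map_add, ← hτ]
    _ = 0 := by rw [huv, map_zero]
  exact (mul_eq_zero.mp htwo).resolve_left two_ne_zero

theorem map_smul_add_smul_mul_of_anticommute [Ring A] [Algebra R A] {τ : A →ₗ[R] R} {u v : A}
    (hτ : τ (u * v) = τ (v * u)) (hu : u ^ 2 = -1) (hv : v ^ 2 = -1)
    (huv : u * v + v * u = 0) (x₁ y₁ x₂ y₂ : R) :
    τ ((x₁ • u + y₁ • v) * (x₂ • u + y₂ • v)) = -(x₁ * x₂ + y₁ * y₂) * τ 1 := by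
  have huu : τ (u * u) = -τ 1 := by rw [← sq, hu, map_neg]
  have hvv : τ (v * v) = -τ 1 := by rw [← sq, hv, map_neg]
  have huv₀ : τ (u * v) = 0 := map_mul_eq_zero_of_anticommute hτ huv
  have hvu₀ : τ (v * u) = 0 := hτ ▸ huv₀
  simp only [add_mul, mul_add, smul_mul_smul_comm, map_add, map_smul, smul_eq_mul,
    huu, hvv, huv₀, hvu₀]
  ring

end Anticommuting

theorem one_add_sq_eq_sub_mul_add {R : Type*} [CommRing R] {i z : R} (hi : i ^ 2 = -1) :
    1 + z ^ 2 = (z - i) * (z + i) := by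
  linear_combination hi

section Field

variable {K : Type*} [Field K] {i z : K}

theorem one_div_sq_sub_four_mul_div_cube_mul_sub (hi : i ^ 2 = -1) (hz : 1 + z ^ 2 ≠ 0) :
    1 / (1 + z ^ 2) ^ 2 - 4 * z / (1 + z ^ 2) ^ 3 * (z - i)
      = (z - i) * (i - 3 * z) / (1 + z ^ 2) ^ 3 := by
  field_simp
  linear_combination hi

theorem trace_identity_2_30_general [NeZero (2 : K)] {A : Type*} [Ring A] [Algebra K A]
    {τ : A →ₗ[K] K} (hτ : ∀ x y : A, τ (x * y) = τ (y * x)) {u v : A}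
    (hu : u ^ 2 = -1) (hv : v ^ 2 = -1) (huv : u * v + v * u = 0)
    (hi : i ^ 2 = -1) (hz : 1 + z ^ 2 ≠ 0) (b : K) :
    τ (((1 / (2 * (z - i) ^ 2)) • (u + i • v)) *
        ((i * b) • ((1 / (1 + z ^ 2) ^ 2) • v - (4 * z / (1 + z ^ 2) ^ 3) • (u + z • v))))
      = τ 1 / 2 * b * (i - 3 * z) / ((z - i) ^ 4 * (z + i) ^ 3) := by
  have pair (x y : K) : τ ((u + i • v) * (x • u + y • v)) = -(x + i * y) * τ 1 := by
    simpa only [one_smul, one_mul] using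
      map_smul_add_smul_mul_of_anticommute (hτ u v) hu hv huv 1 i x y
  have pair_v : τ ((u + i • v) * v) = -i * τ 1 := by
    simpa only [zero_smul, one_smul, zero_add, mul_one] using pair 0 1
  have pair_u_add : τ ((u + i • v) * (u + z • v)) = -i * (z - i) * τ 1 := by
    have h := pair 1 z
    rw [one_smul] at h
    linear_combination h - τ 1 * hi
  have factor : 1 + z ^ 2 = (z - i) * (z + i) := one_add_sq_eq_sub_mul_add hi
  have sub_ne : z - i ≠ 0 := left_ne_zero_of_mul (factor ▸ hz)
  calc
    _ = -i ^ 2 * (b * τ 1) / (2 * (z - i) ^ 2) *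
          (1 / (1 + z ^ 2) ^ 2 - 4 * z / (1 + z ^ 2) ^ 3 * (z - i)) := by
      simp only [smul_mul_assoc, mul_smul_comm, mul_sub (u + i • v), map_sub, map_smul,
        smul_eq_mul, pair_v, pair_u_add]
      ring
    _ = b * τ 1 / (2 * (z - i) ^ 2) *
          ((z - i) * (i - 3 * z) / ((z - i) * (z + i)) ^ 3) := by
      rw [one_div_sq_sub_four_mul_div_cube_mul_sub hi hz, factor, hi, neg_neg, one_mul]
    _ = τ 1 / 2 * b * (i - 3 * z) / ((z - i) ^ 4 * (z + i) ^ 3) := by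
      field_simp

end Field

/-- trace identity (2.30). -/
theorem trace_identity_2_30 (A : Type*) [Ring A] [Algebra ℂ A]
    (τ : A →ₗ[ℂ] ℂ) (hτ : ∀ x y : A, τ (x * y) = τ (y * x)) (hτ1 : τ 1 = 4)
    (u v : A) (hu : u ^ 2 = -1) (hv : v ^ 2 = -1) (huv : u * v + v * u = 0)
    (ξ a : ℝ) :
    τ (((1 / (2 * ((ξ : ℂ) - I) ^ 2)) • (u + I • v)) *
       ((I * (a : ℂ)) • ((1 / (1 + (ξ : ℂ) ^ 2) ^ 2) • v
          - (4 * (ξ : ℂ) / (1 + (ξ : ℂ) ^ 2) ^ 3) • (u + (ξ : ℂ) • v))))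
    = 2 * (a : ℂ) * (I - 3 * (ξ : ℂ))
        / (((ξ : ℂ) - I) ^ 4 * ((ξ : ℂ) + I) ^ 3) := by
  have hξ : 1 + (ξ : ℂ) ^ 2 ≠ 0 := mod_cast (by positivity : 1 + ξ ^ 2 ≠ 0)
  rw [trace_identity_2_30_general hτ hu hv huv I_sq hξ, hτ1]
  norm_num
end
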